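/- Let Q ≥ 2 and ℓ₁,…,ℓ_Q ∈ ℕ₀. Suppose the Fourier transform φ_K of the kernel K is supported in [−1, 1] with ‖φ_K^{(ℓ_q)}‖_∞ < ∞ for q = 1,…,Q, and that U is super smooth of order β (with constants d₀, d₁ > 0, γ > 0, β₀, β₁ ∈ ℝ) and φ_U(t) ≠ 0 for all t. Then there exist a constant C > 0 and h₀ > 0 such that for all 0 < h < h₀, | ∫ ∏_{q=1}^Q K_{U,ℓ_q}(v) dv | ≤ C h^{Qβ₂} exp(Q h^{−β}/γ), where β₂ = β₀·1{β₀ < 0.5}. -/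

import Mathlib

open MeasureTheory Filter Topology Complex

lemma dk_gauss_bound (f : ℝ → ℂ) (B : ℝ) (hf : Integrable f) (hB : ∀ t, ‖f t‖ ≤ B)
    (hs : ∀ t, t ∉ Set.Icc (-1:ℝ) 1 → f t = 0) (F : ℝ → ℂ)
    (hF : ∀ v : ℝ, F v = ∫ t : ℝ, cexp (-(I * t * v)) * f t) (ε : ℝ) (hε : 0 < ε) :
    ∫ v, ‖F v‖ ^ 2 * Real.exp (-ε * v ^ 2) ≤ 4 * Real.pi * B ^ 2 := by
  have hB0 : 0 ≤ B := (norm_nonneg _).trans (hB 0)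
  -- the triple integrand
  let H : ℝ → ℝ × ℝ → ℂ := fun v p =>
    (cexp (I * ((p.2 - p.1 : ℝ) : ℂ) * v) * cexp (-(ε:ℂ) * v ^ 2)) *
      (f p.1 * (starRingEnd ℂ) (f p.2))
  have hgi : Integrable (fun v : ℝ => cexp (-(ε:ℂ) * v ^ 2)) := by
    have := (integrable_exp_neg_mul_sq hε).ofReal (𝕜 := ℂ)
    refine this.congr (Eventually.of_forall fun v => ?_)
    simp
  have hcf : Integrable (fun t => (starRingEnd ℂ) (f t)) :=
    (Complex.conjCLE.toContinuousLinearMap.integrable_comp hf)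
  have hff : Integrable (fun p : ℝ × ℝ => f p.1 * (starRingEnd ℂ) (f p.2)) (volume.prod volume) :=
    hf.mul_prod hcf
  have hHi : Integrable (Function.uncurry H) (volume.prod (volume.prod volume)) := by
    have h1 := hgi.mul_prod hff
    have h2 : Integrable (fun z : ℝ × ℝ × ℝ => cexp (I * ((z.2.2 - z.2.1 : ℝ) : ℂ) * z.1) *
        (cexp (-(ε:ℂ) * z.1 ^ 2) * (f z.2.1 * (starRingEnd ℂ) (f z.2.2))))
        (volume.prod (volume.prod volume)) := by
      refine h1.bdd_mul (c := 1) ?_ ?_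
      · exact (by fun_prop : Continuous fun z : ℝ × ℝ × ℝ =>
          cexp (I * ((z.2.2 - z.2.1 : ℝ) : ℂ) * z.1)).aestronglyMeasurable
      · refine Eventually.of_forall fun z => ?_
        rw [mul_assoc, ← Complex.ofReal_mul, mul_comm, Complex.norm_exp_ofReal_mul_I]
    refine h2.congr (Eventually.of_forall fun z => ?_)
    simp only [Function.uncurry, H]; ring
  have hpt : ∀ v : ℝ, ((‖F v‖ ^ 2 * Real.exp (-ε * v ^ 2) : ℝ) : ℂ) = ∫ p, H v p := by
    intro v
    have hconj : (starRingEnd ℂ) (F v) = ∫ t : ℝ, cexp (I * t * v) * (starRingEnd ℂ) (f t) := by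
      rw [hF, ← integral_conj]
      congr 1; ext t
      simp [← Complex.exp_conj]
    have h1 : ∫ p : ℝ × ℝ, (cexp (-(I * p.1 * v)) * f p.1) *
        (cexp (I * p.2 * v) * (starRingEnd ℂ) (f p.2)) = F v * (starRingEnd ℂ) (F v) := by
      rw [hconj, hF v]
      exact integral_prod_mul (fun s : ℝ => cexp (-(I * s * v)) * f s)
        (fun s : ℝ => cexp (I * s * v) * (starRingEnd ℂ) (f s))
    have h2 : ∀ p, H v p = cexp (-(ε:ℂ) * v ^ 2) * ((cexp (-(I * p.1 * v)) * f p.1) *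
        (cexp (I * p.2 * v) * (starRingEnd ℂ) (f p.2))) := by
      intro p
      have : cexp (I * ((p.2 - p.1 : ℝ) : ℂ) * v) = cexp (-(I * p.1 * v)) * cexp (I * p.2 * v) := by
        rw [← Complex.exp_add]; congr 1; push_cast; ring
      simp only [H, this]; ring
    simp_rw [h2]
    rw [integral_const_mul, h1, Complex.mul_conj, Complex.normSq_eq_norm_sq]
    push_cast; ring
  have hsw : ((∫ v, ‖F v‖ ^ 2 * Real.exp (-ε * v ^ 2) : ℝ) : ℂ)
      = ∫ s, ∫ t, ∫ v, H v (s, t) := by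
    refine (integral_ofReal (𝕜 := ℂ)).symm.trans ?_
    refine (integral_congr_ae (Eventually.of_forall hpt)).trans ?_
    refine (integral_integral_swap hHi).trans ?_
    exact integral_prod _ hHi.integral_prod_right
  have hin : ∀ s t : ℝ, ‖∫ v, H v (s, t)‖ ≤ (Set.Icc (-1:ℝ) 1).indicator (fun _ => (1:ℝ)) s *
      (B ^ 2 * (√(Real.pi / ε) * Real.exp (-(1 / (4 * ε)) * (t - s) ^ 2))) := by
    intro s t
    have hnn : 0 ≤ √(Real.pi / ε) * Real.exp (-(1 / (4 * ε)) * (t - s) ^ 2) := by positivity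
    have : ∫ v, H v (s, t) = ((√(Real.pi / ε) * Real.exp (-(1 / (4 * ε)) * (t - s) ^ 2) : ℝ) : ℂ) *
        (f s * (starRingEnd ℂ) (f t)) := by
      simp only [H]
      rw [integral_mul_const, fourierIntegral_gaussian (by simpa using hε)]
      congr 1
      rw [Complex.ofReal_mul, Real.sqrt_eq_rpow, Complex.ofReal_cpow (by positivity)]
      push_cast
      congr 2
      field_simp
    rw [this, norm_mul, Complex.norm_real, Real.norm_of_nonneg hnn, norm_mul, RCLike.norm_conj]
    by_cases h : s ∈ Set.Icc (-1:ℝ) 1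
    · rw [Set.indicator_of_mem h, one_mul, mul_comm]
      gcongr
      rw [sq]
      exact mul_le_mul (hB s) (hB t) (norm_nonneg _) hB0
    · rw [hs s h, Set.indicator_of_notMem h]; simp
  have hG : ∀ s : ℝ, Integrable (fun t : ℝ => Real.exp (-(1 / (4 * ε)) * (t - s) ^ 2)) := fun s =>
    (integrable_exp_neg_mul_sq (b := 1 / (4 * ε)) (by positivity)).comp_sub_right s
  have hGi : ∀ s : ℝ, ∫ t : ℝ, Real.exp (-(1 / (4 * ε)) * (t - s) ^ 2)
      = √(Real.pi / (1 / (4 * ε))) := fun s => by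
    rw [integral_sub_right_eq_self (fun t : ℝ => Real.exp (-(1 / (4 * ε)) * t ^ 2)) s,
      integral_gaussian]
  have hsq : √(Real.pi / ε) * √(Real.pi / (1 / (4 * ε))) = 2 * Real.pi := by
    rw [← Real.sqrt_mul (by positivity)]
    rw [show Real.pi / ε * (Real.pi / (1 / (4 * ε))) = (2 * Real.pi) ^ 2 by field_simp; norm_num]
    exact Real.sqrt_sq (by positivity)
  have hmid : ∀ s, ‖∫ t, ∫ v, H v (s, t)‖ ≤
      (Set.Icc (-1:ℝ) 1).indicator (fun _ => (1:ℝ)) s * (2 * Real.pi * B ^ 2) := by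
    intro s
    refine (norm_integral_le_of_norm_le ?_ (Eventually.of_forall (hin s))).trans ?_
    · exact (((hG s).const_mul _).const_mul _).const_mul _
    · rw [integral_const_mul, integral_const_mul, integral_const_mul, hGi, hsq, mul_comm (B ^ 2)]
  have hfin : ‖∫ s, ∫ t, ∫ v, H v (s, t)‖ ≤ 4 * Real.pi * B ^ 2 := by
    refine (norm_integral_le_of_norm_le ?_ (Eventually.of_forall hmid)).trans ?_
    · refine Integrable.mul_const ?_ _
      exact (integrable_indicator_iff measurableSet_Icc).2 (integrableOn_const (by simp))
    · rw [integral_mul_const, integral_indicator measurableSet_Icc]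
      simp
      norm_num
      linarith
  rw [← hsw, Complex.norm_real] at hfin
  exact (le_abs_self _).trans hfin

lemma dk_sup (f : ℝ → ℂ) (B : ℝ) (hB : ∀ t, ‖f t‖ ≤ B)
    (hs : ∀ t, t ∉ Set.Icc (-1:ℝ) 1 → f t = 0) (v : ℝ) :
    ‖∫ t : ℝ, cexp (-(I * t * v)) * f t‖ ≤ 2 * B := by
  refine (norm_integral_le_of_norm_le (g := (Set.Icc (-1:ℝ) 1).indicator (fun _ => B)) ?_ 
    (Eventually.of_forall fun t => ?_)).trans ?_
  · exact (integrable_indicator_iff measurableSet_Icc).2 (integrableOn_const (by simp))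
  · by_cases h : t ∈ Set.Icc (-1:ℝ) 1
    · rw [Set.indicator_of_mem h, norm_mul, show -(I * t * v) = ((-(t * v) : ℝ) : ℂ) * I by
        push_cast; ring, Complex.norm_exp_ofReal_mul_I, one_mul]
      exact hB t
    · rw [Set.indicator_of_notMem h, hs t h]; simp
  · rw [integral_indicator measurableSet_Icc]
    simp
    norm_num

lemma dk_l2 (f : ℝ → ℂ) (B : ℝ) (hB : ∀ t, ‖f t‖ ≤ B)
    (hs : ∀ t, t ∉ Set.Icc (-1:ℝ) 1 → f t = 0) (F : ℝ → ℂ)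
    (hF : ∀ v : ℝ, F v = ∫ t : ℝ, cexp (-(I * t * v)) * f t) :
    Integrable (fun v => ‖F v‖ ^ 2) ∧ ∫ v, ‖F v‖ ^ 2 ≤ 4 * Real.pi * B ^ 2 := by
  have hB0 : 0 ≤ B := (norm_nonneg _).trans (hB 0)
  by_cases hf : Integrable f
  swap
  · have h0 : ∀ v, F v = 0 := by
      intro v
      rw [hF]
      apply integral_undef
      intro hi
      apply hf
      have := hi.bdd_mul (f := fun t : ℝ => cexp (I * t * v)) (c := 1)
        (by fun_prop) (Eventually.of_forall fun t => by
          rw [show I * (t:ℂ) * v = ((t * v : ℝ) : ℂ) * I by push_cast; ring,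
            Complex.norm_exp_ofReal_mul_I])
      refine this.congr (Eventually.of_forall fun t => ?_)
      simp only
      rw [← mul_assoc, ← Complex.exp_add]
      simp
    simp only [h0]
    simp
    positivity
  have hFc : Continuous F := by
    rw [show F = fun v : ℝ => ∫ t : ℝ, cexp (-(I * t * v)) * f t from funext hF]
    refine continuous_of_dominated (bound := fun t => ‖f t‖) ?_ ?_ hf.norm ?_
    · intro v
      exact (by fun_prop : Continuous fun t : ℝ => cexp (-(I * t * v))).aestronglyMeasurable.mul hf.1
    · refine fun v => Eventually.of_forall fun t => ?_
      rw [norm_mul, show -(I * t * v) = ((-(t * v) : ℝ) : ℂ) * I by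
        push_cast; ring, Complex.norm_exp_ofReal_mul_I, one_mul]
    · exact Eventually.of_forall fun t => by fun_prop
  have hFb : ∀ v, ‖F v‖ ≤ 2 * B := fun v => by rw [hF]; exact dk_sup f B hB hs v
  have hlin : ∫⁻ v, ENNReal.ofReal (‖F v‖ ^ 2) ≤ ENNReal.ofReal (4 * Real.pi * B ^ 2) := by
    let g : ℕ → ℝ → ENNReal := fun n v =>
      ENNReal.ofReal (‖F v‖ ^ 2 * Real.exp (-(1 / ((n:ℝ) + 1)) * v ^ 2))
    have hlim : ∀ v, Tendsto (fun n => g n v) atTop (𝓝 (ENNReal.ofReal (‖F v‖ ^ 2))) := by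
      intro v
      apply ENNReal.tendsto_ofReal
      have h1 := (tendsto_one_div_add_atTop_nhds_zero_nat (𝕜 := ℝ))
      have h2 : Continuous fun x : ℝ => ‖F v‖ ^ 2 * Real.exp (-x * v ^ 2) := by fun_prop
      have h3 := (h2.tendsto 0).comp h1
      simp only [neg_zero, zero_mul, Real.exp_zero, mul_one] at h3
      exact h3
    have hle : ∀ n, ∫⁻ v, g n v ≤ ENNReal.ofReal (4 * Real.pi * B ^ 2) := by
      intro n
      have hp : (0:ℝ) < 1 / ((n:ℝ) + 1) := by positivity
      rw [← ofReal_integral_eq_lintegral_ofReal]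
      · exact ENNReal.ofReal_le_ofReal (dk_gauss_bound f B hf hB hs F hF _ hp)
      · refine (integrable_exp_neg_mul_sq hp).bdd_mul (c := (2 * B) ^ 2) (by fun_prop)
          (Eventually.of_forall fun v => ?_)
        rw [norm_pow, norm_norm]
        gcongr
        exact hFb v
      · exact Eventually.of_forall fun v => by positivity
    calc ∫⁻ v, ENNReal.ofReal (‖F v‖ ^ 2) = ∫⁻ v, liminf (fun n => g n v) atTop :=
          lintegral_congr fun v => (hlim v).liminf_eq.symm
      _ ≤ liminf (fun n => ∫⁻ v, g n v) atTop := lintegral_liminf_le fun n => by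
          simp only [g]
          fun_prop
      _ ≤ _ := by
          refine (liminf_le_liminf (Eventually.of_forall hle)).trans ?_
          simp
  have hint : Integrable (fun v => ‖F v‖ ^ 2) := by
    refine ⟨by fun_prop, ?_⟩
    rw [hasFiniteIntegral_iff_ofReal (Eventually.of_forall fun v => by positivity)]
    exact hlin.trans_lt ENNReal.ofReal_lt_top
  refine ⟨hint, ?_⟩
  rw [← ofReal_integral_eq_lintegral_ofReal hint (Eventually.of_forall fun v => by positivity)]
    at hlin
  exact (ENNReal.ofReal_le_ofReal_iff (by positivity)).1 hlin

lemma dk_supp (φ : ℝ → ℂ) (h : Function.support φ ⊆ Set.Icc (-1 : ℝ) 1) (n : ℕ) :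
    ∀ t, t ∉ Set.Icc (-1:ℝ) 1 → iteratedDeriv n φ t = 0 := by
  have key : tsupport (iteratedDeriv n φ) ⊆ Set.Icc (-1 : ℝ) 1 := by
    induction n with
    | zero => rw [iteratedDeriv_zero]; exact closure_minimal h isClosed_Icc
    | succ n ih => rw [iteratedDeriv_succ]; exact (tsupport_deriv_subset).trans ih
  intro t ht
  by_contra hne
  exact ht (key (subset_tsupport _ hne))

lemma dk_mono (b β γ s u : ℝ) (hγ : 0 < γ) (hs : 0 < s) (hsu : s ≤ u)
    (hbig : b ≤ s ^ β * β / γ) :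
    s ^ (-b) * Real.exp (s ^ β / γ) ≤ u ^ (-b) * Real.exp (u ^ β / γ) := by
  have hu : 0 < u := hs.trans_le hsu
  rw [Real.rpow_def_of_pos hs (-b), Real.rpow_def_of_pos hu (-b), ← Real.exp_add, ← Real.exp_add]
  apply Real.exp_le_exp.2
  have hlog : 0 ≤ Real.log (u / s) := Real.log_nonneg ((one_le_div hs).2 hsu)
  have h1 : β * Real.log (u / s) + 1 ≤ (u / s) ^ β := by
    rw [Real.rpow_def_of_pos (by positivity), mul_comm β]
    exact Real.add_one_le_exp _
  have h2 : u ^ β = s ^ β * (u / s) ^ β := by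
    rw [← Real.mul_rpow hs.le (by positivity)]; congr 1; field_simp
  have h3 : s ^ β * (β * Real.log (u / s) + 1) ≤ u ^ β := by
    rw [h2]; gcongr
  have h4 : s ^ β * (β * Real.log (u / s) + 1) / γ ≤ u ^ β / γ := by gcongr
  have h5 : b * Real.log (u / s) ≤ s ^ β * β / γ * Real.log (u / s) := by gcongr
  have h6 : s ^ β * (β * Real.log (u / s) + 1) / γ = s ^ β * β / γ * Real.log (u / s) + s ^ β / γ := by
    ring
  rw [Real.log_div hu.ne' hs.ne'] at *
  linarith

lemma dk_inv_bound {φ : ℝ → ℂ} (hc : Continuous φ) (hneg : ∀ t, ‖φ (-t)‖ = ‖φ t‖)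
    (hne : ∀ t, φ t ≠ 0) (β γ d₀ β₀ b : ℝ) (hβ : 0 < β) (hγ : 0 < γ) (hd₀ : 0 < d₀)
    (hb : b ≤ β₀)
    (hss : ∀ᶠ t : ℝ in atTop, d₀ * |t| ^ β₀ * Real.exp (-(|t| ^ β) / γ) ≤ ‖φ t‖) :
    ∃ C > (0 : ℝ), ∃ h₀ > (0 : ℝ), ∀ h : ℝ, 0 < h → h < h₀ → ∀ t ∈ Set.Icc (-1:ℝ) 1,
      ‖φ (-t / h)‖⁻¹ ≤ C * (h ^ b * Real.exp (h ^ (-β) / γ)) := by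
  have hbig : ∀ᶠ s : ℝ in atTop, b ≤ s ^ β * β / γ := by
    have : Tendsto (fun s : ℝ => s ^ β * β / γ) atTop atTop :=
      ((tendsto_rpow_atTop hβ).atTop_mul_const hβ).atTop_div_const hγ
    exact this.eventually_ge_atTop b
  obtain ⟨T, hT⟩ := eventually_atTop.1 (hss.and (hbig.and (eventually_ge_atTop 1)))
  have hT1 : 1 ≤ T := (hT T le_rfl).2.2
  have hT0 : 0 < T := by linarith
  have hcont : Continuous fun s => ‖φ s‖⁻¹ := by
    exact hc.norm.inv₀ fun s => by simpa using hne s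
  obtain ⟨m, hm⟩ := (isCompact_Icc (a := (0:ℝ)) (b := T)).bddAbove_image hcont.continuousOn
  have hm' : ∀ s, 0 ≤ s → s ≤ T → ‖φ s‖⁻¹ ≤ m := fun s h0 h1 =>
    hm (Set.mem_image_of_mem _ ⟨h0, h1⟩)
  have hmpos : 0 ≤ m := (by positivity : 0 ≤ ‖φ 0‖⁻¹).trans (hm' 0 le_rfl hT0.le)
  let g : ℝ → ℝ := fun s => s ^ (-b) * Real.exp (s ^ β / γ)
  have hgT : 0 < g T := by simp only [g]; positivity
  have hgm : ∀ s u, T ≤ s → s ≤ u → g s ≤ g u := fun s u h1 h2 =>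
    dk_mono b β γ s u hγ (by linarith) h2 (hT s h1).2.1
  refine ⟨m / g T + d₀⁻¹, by positivity, T⁻¹, by positivity, ?_⟩
  intro h h0 hh t ht
  have hTh : T ≤ h⁻¹ := (le_inv_comm₀ hT0 h0).2 hh.le
  have hg : h ^ b * Real.exp (h ^ (-β) / γ) = g h⁻¹ := by
    simp only [g]
    rw [Real.inv_rpow h0.le, Real.inv_rpow h0.le, Real.rpow_neg h0.le, Real.rpow_neg h0.le, inv_inv]
  rw [hg]
  have habs : ‖φ (-t / h)‖ = ‖φ (|t| / h)‖ := by
    rcases abs_choice t with h' | h' <;> rw [h']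
    rw [neg_div, hneg]
  rw [habs]
  have ht1 : |t| ≤ 1 := abs_le.2 ht
  set s := |t| / h with hsdef
  have hs0 : 0 ≤ s := by positivity
  have hsh : s ≤ h⁻¹ := by rw [hsdef, div_eq_mul_inv]; exact mul_le_of_le_one_left (by positivity) ht1
  have hgh : 0 < g h⁻¹ := hgT.trans_le (hgm _ _ le_rfl hTh)
  rcases le_total s T with hsT | hsT
  · calc ‖φ s‖⁻¹ ≤ m := hm' s hs0 hsT
      _ = m / g T * g T := by field_simp
      _ ≤ m / g T * g h⁻¹ := by gcongr; exact hgm _ _ le_rfl hTh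
      _ ≤ _ := by gcongr; linarith [inv_pos.2 hd₀]
  · have hspos : 0 < s := by linarith
    have hlow := (hT s hsT).1
    rw [abs_of_pos hspos] at hlow
    calc ‖φ s‖⁻¹ ≤ (d₀ * s ^ β₀ * Real.exp (-(s ^ β) / γ))⁻¹ := by
          gcongr
      _ = d₀⁻¹ * (s ^ (-β₀) * Real.exp (s ^ β / γ)) := by
          rw [mul_inv, mul_inv, ← Real.exp_neg, ← Real.rpow_neg hs0, neg_div, neg_neg, mul_assoc]
      _ ≤ d₀⁻¹ * g s := by
          simp only [g]
          gcongr
          linarith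
      _ ≤ d₀⁻¹ * g h⁻¹ := by gcongr; exact hgm _ _ hsT hsh
      _ ≤ _ := by gcongr; have := div_nonneg hmpos hgT.le; linarith

/-- Bound on products of deconvoluting kernels for super smooth errors (generalization of
Lemma B.9 of Delaigle et al.).  If `φ_K` is supported in `[−1, 1]` with bounded derivatives
`φ_K^{(ℓ_q)}`, and `U` is super smooth of order `β` (constants `d₀, d₁, γ > 0`,
`β₀, β₁ ∈ ℝ`) with nowhere-vanishing characteristic function, then there exist `C > 0` and
`h₀ > 0` such that for all `0 < h < h₀`,
`|∫ ∏_q K_{U,ℓ_q}(v) dv| ≤ C h^{Qβ₂} exp(Q h^{−β}/γ)` with `β₂ = β₀·1{β₀ < 1/2}`. -/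
theorem prod_deconvoluting_kernel_super_smooth_bound
    {Ω : Type*} [MeasurableSpace Ω] (μ : Measure Ω) [IsProbabilityMeasure μ]
    (U : Ω → ℝ) (hU : Measurable U)
    (φU : ℝ → ℂ)
    (hφU : ∀ t : ℝ, φU t = ∫ ω, Complex.exp (Complex.I * t * U ω) ∂μ)
    (β γ d₀ d₁ : ℝ) (β₀ β₁ : ℝ) (hβ : 0 < β) (hγ : 0 < γ) (hd₀ : 0 < d₀) (hd₁ : 0 < d₁)
    (hss : ∀ᶠ t : ℝ in atTop,
      d₀ * |t| ^ β₀ * Real.exp (-(|t| ^ β) / γ) ≤ ‖φU t‖ ∧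
      ‖φU t‖ ≤ d₁ * |t| ^ β₁ * Real.exp (-(|t| ^ β) / γ))
    (hφU_ne : ∀ t, φU t ≠ 0)
    (Q : ℕ) (hQ : 2 ≤ Q) (ℓ : Fin Q → ℕ) (φK : ℝ → ℂ)
    (hφK_supp : Function.support φK ⊆ Set.Icc (-1 : ℝ) 1)
    (hφK_bdd : ∀ q : Fin Q, ∃ C : ℝ, ∀ t, ‖iteratedDeriv (ℓ q) φK t‖ ≤ C)
    (KUl : ℝ → ℕ → ℝ → ℂ)
    (hKUl : ∀ (hb : ℝ) (l : ℕ) (v : ℝ), KUl hb l v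
      = Complex.I ^ (-(l : ℤ)) * (1 / (2 * Real.pi)) *
          ∫ t : ℝ, Complex.exp (-(Complex.I * t * v)) *
            (iteratedDeriv l φK t / φU (-t / hb))) :
    ∃ C > (0 : ℝ), ∃ h₀ > (0 : ℝ), ∀ h : ℝ, 0 < h → h < h₀ →
      ‖∫ v : ℝ, ∏ q : Fin Q, KUl h (ℓ q) v‖
        ≤ C * h ^ ((Q : ℝ) * (if β₀ < 1 / 2 then β₀ else 0)) *
            Real.exp ((Q : ℝ) * h ^ (-β) / γ) := by
  have hchar : ∀ t, φU t = charFun (μ.map U) t := by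
    intro t
    rw [hφU, charFun_apply_real, integral_map hU.aemeasurable (by fun_prop)]
    congr 1; ext ω; congr 1; ring
  have : IsProbabilityMeasure (μ.map U) := Measure.isProbabilityMeasure_map hU.aemeasurable
  have hc : Continuous φU := by
    rw [show φU = charFun (μ.map U) from funext hchar]; exact continuous_charFun
  have hneg : ∀ t, ‖φU (-t)‖ = ‖φU t‖ := by
    intro t; rw [hchar, hchar, charFun_neg, RCLike.norm_conj]
  set b : ℝ := if β₀ < 1 / 2 then β₀ else 0 with hbdef
  have hb : b ≤ β₀ := by
    rw [hbdef]; split_ifs with h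
    · exact le_rfl
    · linarith
  obtain ⟨C₀, hC₀, h₀, hh₀, hinv⟩ := dk_inv_bound hc hneg hφU_ne β γ d₀ β₀ b hβ hγ hd₀ hb
    (hss.mono fun t ht => ht.1)
  choose D hD using hφK_bdd
  obtain ⟨A, hA0, hA⟩ : ∃ A : ℝ, 0 < A ∧ ∀ q t, ‖iteratedDeriv (ℓ q) φK t‖ ≤ A := by
    refine ⟨1 + ∑ q, |D q|, by positivity, fun q t => ?_⟩
    have := Finset.single_le_sum (f := fun q => |D q|) (fun i _ => abs_nonneg _) (Finset.mem_univ q)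
    have h1 := hD q t
    have h2 := le_abs_self (D q)
    linarith
  obtain ⟨n, rfl⟩ : ∃ n, Q = n + 2 := ⟨Q - 2, by omega⟩
  refine ⟨(2 * A) ^ n * (8 * Real.pi * A ^ 2) * C₀ ^ (n + 2), by positivity, h₀, hh₀, ?_⟩
  intro h hpos hlt
  set E : ℝ := h ^ b * Real.exp (h ^ (-β) / γ) with hE
  have hE0 : 0 < E := by positivity
  let B : ℝ := A * (C₀ * E)
  have hBpos : 0 < B := by positivity
  let f : Fin (n + 2) → ℝ → ℂ := fun q t => iteratedDeriv (ℓ q) φK t / φU (-t / h)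
  let F : Fin (n + 2) → ℝ → ℂ := fun q v => ∫ t : ℝ, cexp (-(I * t * v)) * f q t
  have hfs : ∀ q t, t ∉ Set.Icc (-1:ℝ) 1 → f q t = 0 := fun q t ht => by
    simp only [f]; rw [dk_supp φK hφK_supp (ℓ q) t ht, zero_div]
  have hfB : ∀ q t, ‖f q t‖ ≤ B := by
    intro q t
    by_cases ht : t ∈ Set.Icc (-1:ℝ) 1
    · simp only [f, B]
      rw [norm_div, div_eq_mul_inv]
      exact mul_le_mul (hA q t) (hinv h hpos hlt t ht) (by positivity) hA0.le
    · rw [hfs q t ht, norm_zero]; exact hBpos.le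
  have hKF : ∀ q v, ‖KUl h (ℓ q) v‖ ≤ ‖F q v‖ := by
    intro q v
    rw [hKUl, norm_mul]
    refine mul_le_of_le_one_left (norm_nonneg _) ?_
    rw [norm_mul, norm_zpow, Complex.norm_I, one_zpow, one_mul,
      show (1 / (2 * (Real.pi : ℂ))) = ((1 / (2 * Real.pi) : ℝ) : ℂ) by push_cast; rfl,
      Complex.norm_real, Real.norm_of_nonneg (by positivity)]
    rw [div_le_one (by positivity)]
    linarith [Real.pi_gt_three]
  have hFsup : ∀ q v, ‖F q v‖ ≤ 2 * B := fun q v => dk_sup (f q) B (hfB q) (hfs q) v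
  have hF2 := fun q => dk_l2 (f q) B (hfB q) (hfs q) (F q) (fun v => rfl)
  have hpt : ∀ v, ‖∏ q : Fin (n + 2), KUl h (ℓ q) v‖ ≤
      (2 * B) ^ n * (‖F 0 v‖ ^ 2 + ‖F 1 v‖ ^ 2) := by
    intro v
    rw [norm_prod]
    refine (Finset.prod_le_prod (fun _ _ => norm_nonneg _) (fun q _ => hKF q v)).trans ?_
    rw [Fin.prod_univ_succ, Fin.prod_univ_succ]
    have h1 : ∏ i : Fin n, ‖F i.succ.succ v‖ ≤ (2 * B) ^ n := by
      refine (Finset.prod_le_prod (fun _ _ => norm_nonneg _) (fun q _ => hFsup _ v)).trans ?_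
      simp
    have h2 : ‖F 0 v‖ * ‖F 1 v‖ ≤ ‖F 0 v‖ ^ 2 + ‖F 1 v‖ ^ 2 := by
      nlinarith [sq_nonneg (‖F 0 v‖ - ‖F 1 v‖), sq_nonneg (‖F 0 v‖), sq_nonneg (‖F 1 v‖)]
    rw [← mul_assoc, mul_comm]
    exact mul_le_mul h1 h2 (by positivity) (by positivity)
  refine (norm_integral_le_of_norm_le (((hF2 0).1.add (hF2 1).1).const_mul _)
    (Eventually.of_forall hpt)).trans ?_
  have hEQ : E ^ (n + 2) = h ^ (((n + 2 : ℕ) : ℝ) * b) *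
      Real.exp (((n + 2 : ℕ) : ℝ) * h ^ (-β) / γ) := by
    rw [hE, mul_pow, ← Real.rpow_mul_natCast hpos.le, ← Real.exp_nat_mul, mul_comm b, mul_div_assoc]
  have hadd : ∫ v, (‖F 0 v‖ ^ 2 + ‖F 1 v‖ ^ 2) = (∫ v, ‖F 0 v‖ ^ 2) + ∫ v, ‖F 1 v‖ ^ 2 :=
    integral_add (hF2 0).1 (hF2 1).1
  have hle : ∫ v, (‖F 0 v‖ ^ 2 + ‖F 1 v‖ ^ 2) ≤ 8 * Real.pi * B ^ 2 := by
    rw [hadd]; linarith [(hF2 0).2, (hF2 1).2]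
  rw [integral_const_mul]
  calc _ ≤ (2 * B) ^ n * (8 * Real.pi * B ^ 2) := by gcongr; exact hle
    _ = (2 * A) ^ n * (8 * Real.pi * A ^ 2) * C₀ ^ (n + 2) * E ^ (n + 2) := by
        simp only [B]; ring
    _ = _ := by rw [hEQ]; ring
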